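/- Let m ≥ 1 be an integer, h = 2m, let 𝔅 be the 2h×2h complex matrix given in block form by 𝔅 = [[O_h, (1/2)I_h],[(1/2)I_h, O_h]], and let J_m be the h×h skew-symmetric matrix consisting of m diagonal 2×2 blocks [[0,1],[−1,0]]. Let H = [[H₁₁, H₁₂],[H₂₁, H₂₂]] (h×h blocks) be a 2h×2h complex matrix with Hᵗ·𝔅 = −𝔅·H. Then the three conditions H₂₁ᵗ = 0, H₂₁ᵗ + J_m·H₂₂ᵗ − H₁₁ᵗ·J_m − J_m·H₁₂ᵗ·J_m = 0, and H₂₁ᵗ − J_m·H₂₂ᵗ + H₁₁ᵗ·J_m − J_m·H₁₂ᵗ·J_m = 0 hold simultaneously if and only if H₁₂ = 0, H₂₁ = 0, and J_m·H₂₂ᵗ is symmetric, i.e. J_m·H₂₂ᵗ = (J_m·H₂₂ᵗ)ᵗ. -/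

import Mathlib

open Matrix

/-- The `2m×2m` skew-symmetric matrix `J_m` with `m` diagonal blocks `[[0,1],[-1,0]]`
(here `h = 2m`). -/
noncomputable def Jmat (m : ℕ) : Matrix (Fin 2 × Fin m) (Fin 2 × Fin m) ℂ :=
  Matrix.blockDiagonal fun _ : Fin m => !![0, 1; -1, 0]

/-- The matrix `𝔅 = [[O_h, (1/2)I_h],[(1/2)I_h, O_h]]` of the quadratic form, `h = 2m`. -/
noncomputable def Bmat (m : ℕ) :
    Matrix ((Fin 2 × Fin m) ⊕ (Fin 2 × Fin m)) ((Fin 2 × Fin m) ⊕ (Fin 2 × Fin m)) ℂ :=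
  Matrix.fromBlocks 0 ((1 / 2 : ℂ) • 1) ((1 / 2 : ℂ) • 1) 0

/-!
In the chart `[I | A] ↦ A`, the differential of `g ↦ g([I | A])` at the identity sends `H` to the
value at `A` of the quadratic polynomial `p(X) = H₂₁ᵗ + X H₂₂ᵗ - H₁₁ᵗ X - X H₁₂ᵗ X`, so the three
conditions say that `p` vanishes at `0`, `J` and `-J`. Separating `p(J)` and `p(-J)` into even and
odd parts, this happens iff `H₂₁ᵗ = 0`, `J H₁₂ᵗ J = 0` and `J H₂₂ᵗ = H₁₁ᵗ J`. The factors `J` cancel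
in the second equation, and `H₁₁ᵗ = -H₂₂` together with `Jᵗ = -J` turns the third into the symmetry
of `J H₂₂ᵗ`.
-/

theorem add_eq_zero_and_sub_eq_zero_iff {M : Type*} [AddCommGroup M]
    (h2 : IsSMulRegular M (2 : ℕ)) {x y : M} :
    x + y = 0 ∧ x - y = 0 ↔ x = 0 ∧ y = 0 := by
  refine ⟨fun ⟨hadd, hsub⟩ ↦ ?_, fun ⟨hx, hy⟩ ↦ by simp [hx, hy]⟩
  have hx : x = 0 := h2.right_eq_zero_of_smul <|
    calc 2 • x = (x + y) + (x - y) := by abel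
      _ = 0 := by rw [hadd, hsub, add_zero]
  exact ⟨hx, by simpa [hx] using hadd⟩

-- The left-hand side says that `c + x * d - a * x - x * b * x` vanishes at `x = 0`, `j`, `-j`.
theorem quadratic_eq_zero_at_zero_self_neg_iff {S : Type*} [Ring S] (h2 : IsSMulRegular S (2 : ℕ))
    {j : S} (hj : IsRegular j) {a b c d : S} :
    (c = 0 ∧ c + j * d - a * j - j * b * j = 0 ∧ c - j * d + a * j - j * b * j = 0) ↔
      b = 0 ∧ c = 0 ∧ j * d = a * j := by
  have hcancel : j * b * j = 0 ↔ b = 0 := by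
    rw [hj.right.mul_right_eq_zero_iff, hj.left.mul_left_eq_zero_iff]
  have hsplit : c + j * d - a * j - j * b * j = 0 ∧ c - j * d + a * j - j * b * j = 0 ↔
      c - j * b * j = 0 ∧ j * d - a * j = 0 := by
    refine Iff.trans ?_ (add_eq_zero_and_sub_eq_zero_iff h2)
    congr! 2 <;> abel
  rw [hsplit, sub_eq_zero (a := j * d), ← hcancel]
  constructor
  · rintro ⟨rfl, hquad, hlin⟩
    exact ⟨by simpa using hquad, rfl, hlin⟩
  · rintro ⟨hquad, rfl, hlin⟩
    exact ⟨rfl, by simpa using hquad, hlin⟩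

section

variable {R n : Type*} [CommRing R] [Fintype n]

theorem isSkewAdjoint_smul_iff {c : R} (hc : IsSMulRegular R c) {B A : Matrix n n R} :
    (c • B).IsSkewAdjoint A ↔ B.IsSkewAdjoint A := by
  simp only [Matrix.IsSkewAdjoint, Matrix.IsAdjointPair, Matrix.mul_smul, Matrix.smul_mul]
  exact hc.matrix.eq_iff

variable [DecidableEq n]

theorem isSkewAdjoint_JD_fromBlocks_iff {A B C D : Matrix n n R} :
    (LieAlgebra.Orthogonal.JD n R).IsSkewAdjoint (fromBlocks A B C D) ↔
      Aᵀ = -D ∧ Bᵀ = -B ∧ Cᵀ = -C := by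
  have hAD : Dᵀ = -A ↔ Aᵀ = -D := by
    rw [← transpose_inj, transpose_transpose, transpose_neg, eq_comm, neg_eq_iff_eq_neg]
  simp only [Matrix.IsSkewAdjoint, Matrix.IsAdjointPair, LieAlgebra.Orthogonal.JD,
    fromBlocks_transpose, fromBlocks_neg, fromBlocks_multiply, fromBlocks_inj, Matrix.mul_zero,
    Matrix.mul_one, Matrix.zero_mul, Matrix.one_mul, zero_add, add_zero, hAD]
  tauto

theorem ker_df_conditions_general (h2 : IsSMulRegular R (2 : ℕ)) {J : Matrix n n R}
    (hJ_reg : IsRegular J) (hJ_skew : Jᵀ = -J) {H₁₁ H₁₂ H₂₁ H₂₂ : Matrix n n R}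
    (hso : (LieAlgebra.Orthogonal.JD n R).IsSkewAdjoint (fromBlocks H₁₁ H₁₂ H₂₁ H₂₂)) :
    (H₂₁ᵀ = 0 ∧
      H₂₁ᵀ + J * H₂₂ᵀ - H₁₁ᵀ * J - J * H₁₂ᵀ * J = 0 ∧
      H₂₁ᵀ - J * H₂₂ᵀ + H₁₁ᵀ * J - J * H₁₂ᵀ * J = 0) ↔
    (H₁₂ = 0 ∧ H₂₁ = 0 ∧ J * H₂₂ᵀ = (J * H₂₂ᵀ)ᵀ) := by
  have hH₁₁ : H₁₁ᵀ = -H₂₂ := (isSkewAdjoint_JD_fromBlocks_iff.mp hso).1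
  have hsymm : (J * H₂₂ᵀ)ᵀ = H₁₁ᵀ * J := by
    rw [transpose_mul, transpose_transpose, hJ_skew, hH₁₁, Matrix.mul_neg, Matrix.neg_mul]
  rw [quadratic_eq_zero_at_zero_self_neg_iff h2.matrix hJ_reg, transpose_eq_zero,
    transpose_eq_zero, hsymm]

end

theorem Jmat_transpose (m : ℕ) : (Jmat m)ᵀ = -Jmat m := by
  have hblock : !![0, 1; -1, 0]ᵀ = -!![0, 1; -1, (0 : ℂ)] := by
    simp [← Matrix.ext_iff, Fin.forall_fin_two]
  rw [Jmat, blockDiagonal_transpose, ← blockDiagonal_neg, hblock]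
  rfl

theorem Jmat_mul_self (m : ℕ) : Jmat m * Jmat m = -1 := by
  have hblock : !![0, 1; -1, 0] * !![0, 1; -1, 0] = (-1 : Matrix (Fin 2) (Fin 2) ℂ) := by
    simp [← Matrix.ext_iff, Fin.forall_fin_two]
  rw [Jmat, ← blockDiagonal_mul, ← blockDiagonal_one, ← blockDiagonal_neg, hblock]
  rfl

theorem isUnit_Jmat (m : ℕ) : IsUnit (Jmat m) :=
  isUnit_of_mul_isUnit_left (y := Jmat m) (by rw [Jmat_mul_self]; exact isUnit_one.neg)

theorem Bmat_eq_smul_JD (m : ℕ) :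
    Bmat m = (1 / 2 : ℂ) • LieAlgebra.Orthogonal.JD (Fin 2 × Fin m) ℂ := by
  rw [Bmat, LieAlgebra.Orthogonal.JD, fromBlocks_smul, smul_zero]

theorem isSkewAdjoint_Bmat_iff {m : ℕ}
    {H : Matrix ((Fin 2 × Fin m) ⊕ (Fin 2 × Fin m)) ((Fin 2 × Fin m) ⊕ (Fin 2 × Fin m)) ℂ} :
    (Bmat m).IsSkewAdjoint H ↔
      (LieAlgebra.Orthogonal.JD (Fin 2 × Fin m) ℂ).IsSkewAdjoint H := by
  rw [Bmat_eq_smul_JD, isSkewAdjoint_smul_iff (.of_ne_zero (by norm_num))]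

/-- For `H ∈ so(2h,Q)`, the three kernel conditions of `df` at the identity hold iff
`H₁₂ = 0`, `H₂₁ = 0` and `J_m·H₂₂ᵗ` is symmetric. -/
theorem ker_df_conditions (m : ℕ) (hm : 1 ≤ m)
    (H₁₁ H₁₂ H₂₁ H₂₂ : Matrix (Fin 2 × Fin m) (Fin 2 × Fin m) ℂ)
    (hso : (Matrix.fromBlocks H₁₁ H₁₂ H₂₁ H₂₂)ᵀ * Bmat m =
      -(Bmat m * Matrix.fromBlocks H₁₁ H₁₂ H₂₁ H₂₂)) :
    (H₂₁ᵀ = 0 ∧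
      H₂₁ᵀ + Jmat m * H₂₂ᵀ - H₁₁ᵀ * Jmat m - Jmat m * H₁₂ᵀ * Jmat m = 0 ∧
      H₂₁ᵀ - Jmat m * H₂₂ᵀ + H₁₁ᵀ * Jmat m - Jmat m * H₁₂ᵀ * Jmat m = 0) ↔
    (H₁₂ = 0 ∧ H₂₁ = 0 ∧ Jmat m * H₂₂ᵀ = (Jmat m * H₂₂ᵀ)ᵀ) :=
  ker_df_conditions_general (.of_ne_zero two_ne_zero) (isUnit_Jmat m).isRegular (Jmat_transpose m)
    (isSkewAdjoint_Bmat_iff.mp (hso.trans (Matrix.mul_neg _ _).symm))
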